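/- arXiv:1812.11299 — 2 statements merged into one kernel-verified Lean document; each statement's English description precedes it below -/
import Mathlib

section
/- Let (p_n)_{n≥1} be a Schauder decomposition of a complex Banach space X which is NOT R-Schauder. Then there exists a nondecreasing sequence (a_n)_{n≥1} of positive real numbers with a_n → ∞ such that, setting b_n = a_n^{-1} and letting B = M_b ∈ B(X) be the associated multiplier operator, the set {exp(−tB) : t ≥ 0} of bounded operators on X is not R-bounded. -/
open Filter Topology NormedSpace

/-- Average over all sign vectors `(ε_1,…,ε_k) ∈ {−1,1}^k` of `‖∑_j ε_j v_j‖`. -/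
noncomputable def signAvg {X : Type*} [NormedAddCommGroup X] [NormedSpace ℂ X]
    (k : ℕ) (v : Fin k → X) : ℝ :=
  (2 ^ k : ℝ)⁻¹ * ∑ ε : Fin k → Bool, ‖∑ j : Fin k, (if ε j then (1 : ℝ) else -1) • v j‖

/-- A set of bounded operators on `X` is `R`-bounded. -/
def IsRBounded {X : Type*} [NormedAddCommGroup X] [NormedSpace ℂ X]
    (F : Set (X →L[ℂ] X)) : Prop :=
  ∃ C : ℝ, 0 ≤ C ∧ ∀ (k : ℕ) (T : Fin k → X →L[ℂ] X) (x : Fin k → X),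
    (∀ j, T j ∈ F) → signAvg k (fun j => (T j) (x j)) ≤ C * signAvg k x

/-- `(p n)` is a Schauder decomposition of `X`: the `p n` are pairwise "orthogonal"
bounded projections whose partial sums converge pointwise to the identity.
(Indexing starts at `0`, corresponding to `n = 1` in the classical notation.) -/
def IsSchauderDecomposition {X : Type*} [NormedAddCommGroup X] [NormedSpace ℂ X]
    (p : ℕ → X →L[ℂ] X) : Prop :=
  (∀ n, (p n).comp (p n) = p n) ∧
  (∀ m n, m ≠ n → (p m).comp (p n) = 0) ∧
  (∀ x : X, Tendsto (fun N => ∑ n ∈ Finset.range N, p n x) atTop (nhds x))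

/-- The partial sum projection `P_N = ∑_{n<N} p_n`. -/
noncomputable def partialSum {X : Type*} [NormedAddCommGroup X] [NormedSpace ℂ X]
    (p : ℕ → X →L[ℂ] X) (N : ℕ) : X →L[ℂ] X :=
  ∑ n ∈ Finset.range N, p n

/-!
If the `a_n` grow fast enough and `t_N` is the geometric mean of `a_N` and `a_{N+1}`, then
`1 - exp (-t_N / a_n)` is close to `1` for `n ≤ N` and close to `0` for `n > N`. Hence the operators
`1 - exp (-t_N B)` and `P_N` are multipliers whose coefficients differ by an absolutely summable
double sequence, so that the norms of their differences are summable over `N`. As `R`-boundedness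
is stable under norm-summable perturbations, an `R`-bounded semigroup `exp (-t B)` would make the
partial sums `P_N` `R`-bounded.
-/

section SignAvg

variable {X Y : Type*} [NormedAddCommGroup X] [NormedSpace ℂ X]
  [NormedAddCommGroup Y] [NormedSpace ℂ Y] {k : ℕ}

theorem signAvg_nonneg (v : Fin k → X) : 0 ≤ signAvg k v := by
  unfold signAvg
  positivity

theorem signAvg_sub_le (v w : Fin k → X) : signAvg k (v - w) ≤ signAvg k v + signAvg k w := by
  unfold signAvg
  rw [← mul_add, ← Finset.sum_add_distrib]
  gcongr with ε
  simp only [Pi.sub_apply, smul_sub, Finset.sum_sub_distrib]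
  exact norm_sub_le _ _

theorem signAvg_smul (c : ℂ) (v : Fin k → X) : signAvg k (c • v) = ‖c‖ * signAvg k v := by
  simp only [signAvg, Pi.smul_apply, smul_comm _ c, ← Finset.smul_sum, norm_smul,
    ← Finset.mul_sum, mul_left_comm]

theorem signAvg_sum_le {ι : Type*} (s : Finset ι) (v : ι → Fin k → X) :
    signAvg k (fun j => ∑ i ∈ s, v i j) ≤ ∑ i ∈ s, signAvg k (v i) := by
  unfold signAvg
  rw [← Finset.mul_sum, Finset.sum_comm]
  gcongr with ε
  simp only [Finset.smul_sum]
  rw [Finset.sum_comm]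
  exact norm_sum_le _ _

theorem signAvg_map_le (T : X →L[ℂ] Y) (v : Fin k → X) :
    signAvg k (fun j => T (v j)) ≤ ‖T‖ * signAvg k v := by
  unfold signAvg
  rw [mul_left_comm, Finset.mul_sum _ _ ‖T‖]
  gcongr with ε
  simpa only [map_sum, T.map_smul_of_tower] using
    T.le_opNorm (∑ j, (if ε j then (1 : ℝ) else -1) • v j)

open Classical in
theorem signAvg_piecewise_neg (J : Set (Fin k)) (v : Fin k → X) :
    signAvg k (J.piecewise (-v) v) = signAvg k v := by
  let flip : (Fin k → Bool) → Fin k → Bool := fun ε => J.piecewise (fun j => !(ε j)) ε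
  have flip_involutive : Function.Involutive flip := by
    intro ε
    funext j
    by_cases hj : j ∈ J <;> simp [flip, hj]
  unfold signAvg
  congr 1
  refine Fintype.sum_equiv flip_involutive.toPerm _ _ fun ε => ?_
  congr 1
  refine Finset.sum_congr rfl fun j _ => ?_
  by_cases hj : j ∈ J <;> cases hε : ε j <;> simp [flip, hj, hε]

theorem signAvg_indicator_le (J : Set (Fin k)) (v : Fin k → X) :
    signAvg k (J.indicator v) ≤ signAvg k v := by
  classical
  have half_sub : J.indicator v = (1 / 2 : ℂ) • (v - J.piecewise (-v) v) := by
    funext j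
    by_cases hj : j ∈ J
    · simp [hj, ← two_smul ℂ (v j)]
    · simp [hj]
  calc signAvg k (J.indicator v)
      = 1 / 2 * signAvg k (v - J.piecewise (-v) v) := by rw [half_sub, signAvg_smul]; norm_num
    _ ≤ 1 / 2 * (signAvg k v + signAvg k (J.piecewise (-v) v)) := by
        gcongr
        exact signAvg_sub_le _ _
    _ = signAvg k v := by rw [signAvg_piecewise_neg]; ring

end SignAvg

section RBounded

open scoped Pointwise

variable {X : Type*} [NormedAddCommGroup X] [NormedSpace ℂ X] {F G : Set (X →L[ℂ] X)} {ι : Type*}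

theorem IsRBounded.mono (hG : IsRBounded G) (h : F ⊆ G) : IsRBounded F := by
  obtain ⟨C, hC₀, hC⟩ := hG
  exact ⟨C, hC₀, fun k T x hT => hC k T x fun j => h (hT j)⟩

theorem IsRBounded.sub (hF : IsRBounded F) (hG : IsRBounded G) : IsRBounded (F - G) := by
  obtain ⟨C, hC₀, hC⟩ := hF
  obtain ⟨D, hD₀, hD⟩ := hG
  refine ⟨C + D, add_nonneg hC₀ hD₀, fun k T x hT => ?_⟩
  choose U hU V hV hUV using hT
  calc signAvg k (fun j => T j (x j))
      = signAvg k ((fun j => U j (x j)) - fun j => V j (x j)) := by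
        simp only [← hUV]
        rfl
    _ ≤ signAvg k (fun j => U j (x j)) + signAvg k (fun j => V j (x j)) := signAvg_sub_le _ _
    _ ≤ C * signAvg k x + D * signAvg k x := add_le_add (hC k U x hU) (hD k V x hV)
    _ = (C + D) * signAvg k x := by ring

theorem isRBounded_singleton (T : X →L[ℂ] X) : IsRBounded {T} := by
  refine ⟨‖T‖, norm_nonneg T, fun k U x hU => ?_⟩
  obtain rfl : U = fun _ => T := funext hU
  exact signAvg_map_le T x

theorem isRBounded_range_of_summable_norm {T : ι → X →L[ℂ] X} (hT : Summable fun i => ‖T i‖) :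
    IsRBounded (Set.range T) := by
  classical
  refine ⟨∑' i, ‖T i‖, tsum_nonneg fun i => norm_nonneg _, fun k U x hU => ?_⟩
  choose n hn using hU
  -- The operators may repeat, so the terms are grouped by operator before the norms are summed.
  have apply_eq_sum (j : Fin k) :
      U j (x j) = ∑ i ∈ Finset.univ.image n, T i ((n ⁻¹' {i}).indicator x j) := by
    rw [Finset.sum_eq_single (n j) (fun i _ hi => by simp [hi.symm]) (by simp), ← hn j]
    simp
  calc signAvg k (fun j => U j (x j))
      ≤ ∑ i ∈ Finset.univ.image n, signAvg k (fun j => T i ((n ⁻¹' {i}).indicator x j)) := by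
        simp only [apply_eq_sum]
        exact signAvg_sum_le _ _
    _ ≤ ∑ i ∈ Finset.univ.image n, ‖T i‖ * signAvg k x := by
        gcongr with i
        exact (signAvg_map_le _ _).trans (by gcongr; exact signAvg_indicator_le _ _)
    _ ≤ (∑' i, ‖T i‖) * signAvg k x := by
        rw [← Finset.sum_mul]
        gcongr
        · exact signAvg_nonneg x
        · exact hT.sum_le_tsum _ fun i _ => norm_nonneg _

theorem IsRBounded.range_of_summable_norm_sub {T S : ι → X →L[ℂ] X}
    (hT : IsRBounded (Set.range T)) (hTS : Summable fun i => ‖T i - S i‖) :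
    IsRBounded (Set.range S) := by
  refine (hT.sub (isRBounded_range_of_summable_norm hTS)).mono ?_
  rintro _ ⟨i, rfl⟩
  exact ⟨T i, ⟨i, rfl⟩, T i - S i, ⟨i, rfl⟩, sub_sub_cancel _ _⟩

end RBounded

theorem exp_apply_of_apply_eq_smul {X : Type*} [NormedAddCommGroup X] [NormedSpace ℂ X]
    [CompleteSpace X] {T : X →L[ℂ] X} {c : ℂ} {v : X} (h : T v = c • v) :
    (exp T) v = Complex.exp c • v := by
  have pow_apply (n : ℕ) : (T ^ n) v = c ^ n • v := by
    induction n with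
    | zero => simp
    | succ n ih => rw [pow_succ', mul_apply_eq_comp, ih, map_smul, h, smul_smul, pow_succ]
  have hasSum_operator := (exp_series_hasSum_exp' (𝕂 := ℂ) T).mapL (.apply ℂ X v)
  have hasSum_scalar := (exp_series_hasSum_exp' (𝕂 := ℂ) c).smul_const v
  rw [Complex.exp_eq_exp_ℂ]
  refine hasSum_operator.unique ?_
  simpa [pow_apply, smul_smul] using hasSum_scalar

section Multiplier

variable {X : Type*} [NormedAddCommGroup X] [NormedSpace ℂ X]

/-- `T` is the multiplier `M_c` of the sequence `c` along `p`. As the series `∑ c_n p_n x` need not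
converge for a general `c`, this is a relation between `c` and `T` rather than a function of `c`. -/
def IsMultiplier (p : ℕ → X →L[ℂ] X) (c : ℕ → ℂ) (T : X →L[ℂ] X) : Prop :=
  ∀ x, Tendsto (fun N => ∑ n ∈ Finset.range N, c n • p n x) atTop (𝓝 (T x))

variable {p : ℕ → X →L[ℂ] X} {c d : ℕ → ℂ} {T S : X →L[ℂ] X} {K : ℝ}

theorem IsMultiplier.sub (hT : IsMultiplier p c T) (hS : IsMultiplier p d S) :
    IsMultiplier p (c - d) (T - S) := fun x => by
  simpa only [Pi.sub_apply, sub_smul, Finset.sum_sub_distrib, sub_apply] using (hT x).sub (hS x)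

theorem IsMultiplier.smul (a : ℂ) (hT : IsMultiplier p c T) :
    IsMultiplier p (a • c) (a • T) := fun x => by
  simpa only [Pi.smul_apply, smul_assoc, ← Finset.smul_sum, smul_apply] using (hT x).const_smul a

theorem isMultiplier_partialSum (p : ℕ → X →L[ℂ] X) (N : ℕ) :
    IsMultiplier p ((Set.Iio N).indicator 1) (partialSum p N) := fun x => by
  refine tendsto_atTop_of_eventually_const (i₀ := N) fun M hM => ?_
  rw [partialSum, sum_apply]
  refine (Finset.sum_subset_zero_on_sdiff (Finset.range_subset_range.2 hM) ?_ ?_).symm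
  · intro n hn
    rw [Set.indicator_of_notMem (by simpa using (Finset.mem_sdiff.1 hn).2), zero_smul]
  · intro n hn
    rw [Set.indicator_of_mem (by simpa using hn), Pi.one_apply, one_smul]

theorem exists_isMultiplier_of_summable [CompleteSpace X] (hK : ∀ n, ‖p n‖ ≤ K)
    (hc : Summable fun n => ‖c n‖) : ∃ T, IsMultiplier p c T := by
  have hcp : Summable fun n => c n • p n := by
    refine .of_norm_bounded (hc.mul_right K) fun n => ?_
    rw [norm_smul]
    gcongr
    exact hK n
  obtain ⟨T, hT⟩ := hcp
  exact ⟨T, fun x => (hT.mapL (.apply ℂ X x)).tendsto_sum_nat⟩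

theorem IsMultiplier.norm_le (hT : IsMultiplier p c T) (hK : ∀ n, ‖p n‖ ≤ K)
    (hc : Summable fun n => ‖c n‖) : ‖T‖ ≤ (∑' n, ‖c n‖) * K := by
  have hK₀ : 0 ≤ K := (norm_nonneg _).trans (hK 0)
  refine T.opNorm_le_bound (by positivity) fun x => ?_
  refine le_of_tendsto (hT x).norm (.of_forall fun N => ?_)
  calc ‖∑ n ∈ Finset.range N, c n • p n x‖
      ≤ ∑ n ∈ Finset.range N, ‖c n‖ * (K * ‖x‖) := by
        refine norm_sum_le_of_le _ fun n _ => ?_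
        rw [norm_smul]
        gcongr
        exact (p n).le_of_opNorm_le (hK n) x
    _ ≤ (∑' n, ‖c n‖) * (K * ‖x‖) := by
        rw [← Finset.sum_mul]
        gcongr
        exact hc.sum_le_tsum _ fun n _ => norm_nonneg _
    _ = (∑' n, ‖c n‖) * K * ‖x‖ := (mul_assoc _ _ _).symm

theorem IsRBounded.range_of_isMultiplier {ι : Type*} {c d : ι → ℕ → ℂ} {T S : ι → X →L[ℂ] X}
    (hTR : IsRBounded (Set.range T)) (hT : ∀ i, IsMultiplier p (c i) (T i))
    (hS : ∀ i, IsMultiplier p (d i) (S i)) (hK : ∀ n, ‖p n‖ ≤ K)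
    (hcd : Summable fun q : ι × ℕ => ‖c q.1 q.2 - d q.1 q.2‖) : IsRBounded (Set.range S) := by
  refine hTR.range_of_summable_norm_sub ?_
  refine .of_nonneg_of_le (fun i => norm_nonneg _) (fun i => ?_) (hcd.prod.mul_right K)
  exact ((hT i).sub (hS i)).norm_le hK (hcd.prod_factor i)

namespace IsSchauderDecomposition

theorem apply_apply (hp : IsSchauderDecomposition p) (m n : ℕ) (x : X) :
    p m (p n x) = if m = n then p n x else 0 := by
  split_ifs with h
  · subst h
    exact DFunLike.congr_fun (hp.1 m) x
  · exact DFunLike.congr_fun (hp.2.1 m n h) x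

theorem exists_norm_le [CompleteSpace X] (hp : IsSchauderDecomposition p) :
    ∃ K, ∀ n, ‖p n‖ ≤ K := by
  refine banach_steinhaus fun x => ?_
  have tendsto_apply : Tendsto (fun n => p n x) atTop (𝓝 (x - x)) := by
    simpa only [Function.comp_def, Finset.sum_range_succ, add_sub_cancel_left] using
      ((hp.2.2 x).comp (tendsto_add_atTop_nat 1)).sub (hp.2.2 x)
  obtain ⟨C, hC⟩ := (Metric.isBounded_range_of_tendsto _ tendsto_apply).exists_norm_le
  exact ⟨C, fun n => hC _ ⟨n, rfl⟩⟩

theorem isMultiplier_one (hp : IsSchauderDecomposition p) : IsMultiplier p 1 1 := fun x => by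
  simpa using hp.2.2 x

theorem multiplier_apply_apply (hp : IsSchauderDecomposition p) (hT : IsMultiplier p c T)
    (n : ℕ) (x : X) : T (p n x) = c n • p n x := by
  refine tendsto_nhds_unique (hT (p n x)) ?_
  refine tendsto_atTop_of_eventually_const (i₀ := n + 1) fun M hM => ?_
  simp only [hp.apply_apply, smul_ite, smul_zero]
  rw [Finset.sum_ite_eq', if_pos (Finset.mem_range.2 hM)]

theorem isMultiplier_exp [CompleteSpace X] (hp : IsSchauderDecomposition p)
    (hT : IsMultiplier p c T) : IsMultiplier p (fun n => Complex.exp (c n)) (exp T) := fun x => by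
  simpa only [Function.comp_def, map_sum,
    exp_apply_of_apply_eq_smul (hp.multiplier_apply_apply hT _ x)] using
    ((exp T).continuous.tendsto x).comp (hp.2.2 x)

end IsSchauderDecomposition

end Multiplier

section Weights

/-- The weights `a_n = 2 ^ (2 n²)`, growing so fast that the ratios `a_{n+1} / a_n` tend to
infinity geometrically. -/
noncomputable def gaussWeight (n : ℕ) : ℝ := 2 ^ (2 * n ^ 2)

/-- The geometric mean of `gaussWeight N` and `gaussWeight (N + 1)`, used as a time `t` at which
`exp (-t / a_n)` is close to `0` for `n ≤ N` and close to `1` for `n > N`. -/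
noncomputable def gaussTime (N : ℕ) : ℝ := 2 ^ (2 * N ^ 2 + 2 * N + 1)

theorem gaussWeight_pos (n : ℕ) : 0 < gaussWeight n := by
  unfold gaussWeight
  positivity

theorem gaussTime_pos (N : ℕ) : 0 < gaussTime N := by
  unfold gaussTime
  positivity

theorem monotone_gaussWeight : Monotone gaussWeight := fun m n hmn =>
  pow_le_pow_right₀ one_le_two (by gcongr)

theorem two_pow_le_gaussWeight (n : ℕ) : 2 ^ n ≤ gaussWeight n :=
  pow_le_pow_right₀ one_le_two (by nlinarith [Nat.le_self_pow two_ne_zero n])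

theorem tendsto_gaussWeight_atTop : Tendsto gaussWeight atTop atTop :=
  tendsto_atTop_mono two_pow_le_gaussWeight (tendsto_pow_atTop_atTop_of_one_lt one_lt_two)

theorem summable_inv_gaussWeight : Summable fun n => (gaussWeight n)⁻¹ := by
  refine .of_nonneg_of_le (fun n => (inv_pos.2 (gaussWeight_pos n)).le) (fun n => ?_)
    summable_geometric_two
  rw [one_div, inv_pow]
  exact inv_anti₀ (by positivity) (two_pow_le_gaussWeight n)

theorem two_pow_le_gaussTime_div {N n : ℕ} (h : n ≤ N) :
    2 ^ (N + n) ≤ gaussTime N / gaussWeight n := by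
  rw [le_div_iff₀ (gaussWeight_pos n), gaussWeight, gaussTime, ← pow_add]
  exact pow_le_pow_right₀ one_le_two (by nlinarith)

theorem gaussTime_div_le {N n : ℕ} (h : N < n) :
    gaussTime N / gaussWeight n ≤ (2 ^ (N + n))⁻¹ := by
  rw [div_le_iff₀ (gaussWeight_pos n), inv_mul_eq_div, le_div_iff₀ (by positivity), gaussWeight,
    gaussTime, ← pow_add]
  refine pow_le_pow_right₀ one_le_two ?_
  obtain ⟨k, rfl⟩ := Nat.exists_eq_add_of_lt h
  nlinarith

theorem abs_one_sub_exp_sub_indicator_le (N n : ℕ) :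
    |1 - Real.exp (-(gaussTime N / gaussWeight n)) - (Set.Iio (N + 1)).indicator 1 n| ≤
      (1 / 2) ^ N * (1 / 2) ^ n := by
  rw [← pow_add, one_div, inv_pow]
  set y := gaussTime N / gaussWeight n
  have hy : 0 < y := div_pos (gaussTime_pos N) (gaussWeight_pos n)
  rcases Nat.lt_or_ge N n with h | h
  · rw [Set.indicator_of_notMem (by simpa using h), sub_zero,
      abs_of_nonneg (by simpa using hy.le)]
    calc 1 - Real.exp (-y) ≤ y := by linarith [Real.one_sub_le_exp_neg y]
      _ ≤ (2 ^ (N + n))⁻¹ := gaussTime_div_le h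
  · rw [Set.indicator_of_mem (by simpa [Nat.lt_succ_iff] using h), Pi.one_apply,
      sub_sub_cancel_left, abs_neg, Real.abs_exp, Real.exp_neg]
    gcongr
    calc 2 ^ (N + n) ≤ y := two_pow_le_gaussTime_div h
      _ ≤ Real.exp y := by linarith [Real.add_one_le_exp y]

theorem summable_one_sub_exp_sub_indicator :
    Summable fun q : ℕ × ℕ => ‖(1 - Complex.exp (-(gaussTime q.1 * ((gaussWeight q.2)⁻¹ : ℝ)))) -
      (Set.Iio (q.1 + 1)).indicator 1 q.2‖ := by
  refine .of_nonneg_of_le (fun q => norm_nonneg _) (fun q => ?_)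
    (summable_geometric_two.mul_of_nonneg summable_geometric_two
      (fun n => by positivity) fun n => by positivity)
  convert abs_one_sub_exp_sub_indicator_le q.1 q.2 using 1
  rw [← Real.norm_eq_abs, ← Complex.norm_real]
  by_cases h : q.2 ∈ Set.Iio (q.1 + 1) <;> simp [h, div_eq_mul_inv]

end Weights

theorem IsSchauderDecomposition.isRBounded_range_partialSum {X : Type*} [NormedAddCommGroup X]
    [NormedSpace ℂ X] [CompleteSpace X] {p : ℕ → X →L[ℂ] X} (hp : IsSchauderDecomposition p)
    {B : X →L[ℂ] X} (hB : IsMultiplier p (fun n => (((gaussWeight n)⁻¹ : ℝ) : ℂ)) B)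
    (hR : IsRBounded {S : X →L[ℂ] X | ∃ t : ℝ, 0 ≤ t ∧ S = exp (-((t : ℂ) • B))}) :
    IsRBounded (Set.range fun N : ℕ => partialSum p (N + 1)) := by
  obtain ⟨K, hK⟩ := hp.exists_norm_le
  let T : ℕ → X →L[ℂ] X := fun N => 1 - exp (-((gaussTime N : ℂ) • B))
  have isRBounded_T : IsRBounded (Set.range T) := by
    refine ((isRBounded_singleton 1).sub hR).mono ?_
    rintro _ ⟨N, rfl⟩
    exact ⟨1, rfl, _, ⟨gaussTime N, (gaussTime_pos N).le, rfl⟩, rfl⟩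
  have isMultiplier_T (N : ℕ) : IsMultiplier p
      (fun n => 1 - Complex.exp (-(gaussTime N * ((gaussWeight n)⁻¹ : ℝ)))) (T N) := by
    have h := hB.smul (-(gaussTime N : ℂ))
    rw [neg_smul _ B] at h
    simpa [T, Pi.smul_def, Pi.sub_def] using hp.isMultiplier_one.sub (hp.isMultiplier_exp h)
  exact isRBounded_T.range_of_isMultiplier isMultiplier_T
    (fun N => isMultiplier_partialSum p (N + 1)) hK summable_one_sub_exp_sub_indicator

/-- If a Schauder decomposition is not `R`-Schauder, there is a nondecreasing sequence
`a_n > 0` tending to `∞` such that, for the multiplier `B = M_b` with `b_n = a_n⁻¹`,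
the set `{exp(−tB) : t ≥ 0}` is not `R`-bounded. -/
theorem statement0 {X : Type*} [NormedAddCommGroup X] [NormedSpace ℂ X] [CompleteSpace X]
    (p : ℕ → X →L[ℂ] X) (hp : IsSchauderDecomposition p)
    (hnotR : ¬ IsRBounded (Set.range fun N : ℕ => partialSum p (N + 1))) :
    ∃ a : ℕ → ℝ, Monotone a ∧ (∀ n, 0 < a n) ∧ Tendsto a atTop atTop ∧
      ∃ B : X →L[ℂ] X,
        (∀ x : X, Tendsto (fun N => ∑ n ∈ Finset.range N, (((a n)⁻¹ : ℝ) : ℂ) • p n x)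
          atTop (nhds (B x))) ∧
        ¬ IsRBounded {S : X →L[ℂ] X | ∃ t : ℝ, 0 ≤ t ∧ S = exp (-((t : ℂ) • B))} := by
  obtain ⟨K, hK⟩ := hp.exists_norm_le
  obtain ⟨B, hB⟩ : ∃ B, IsMultiplier p (fun n => (((gaussWeight n)⁻¹ : ℝ) : ℂ)) B :=
    exists_isMultiplier_of_summable hK (by simpa using summable_inv_gaussWeight.norm)
  exact ⟨gaussWeight, monotone_gaussWeight, gaussWeight_pos, tendsto_gaussWeight_atTop, B, hB,
    fun hR => hnotR (hp.isRBounded_range_partialSum hB hR)⟩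
end

section
/- Let (p_n)_{n≥1} be a Schauder decomposition of a complex Banach space X with K := sup_{N≥1} ‖P_N‖, and set Q_N := I − P_N for N ≥ 1. Let c = (c_n)_{n≥1} be a complex sequence with bounded variation such that lim_n c_n = 1, and let M_c be the associated multiplier operator. Then for every N ≥ 1, ‖M_c − Q_N‖ ≤ (1+K) ( ∑_{n=1}^{N−1} |c_{n+1} − c_n| + |c_N| + |1 − c_{N+1}| + ∑_{n=N+1}^∞ |c_{n+1} − c_n| ). -/
open Filter Topology NormedSpace

/-!
Fix `x` and put `S n = ∑ i < n, p i x` and `R n = x - S n`. Since `Q_N x = R (N + 1)` is the sum of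
the `p i x` with `i > N`, the vector `M x - Q_N x` splits into the head `∑ i ≤ N, c i • p i x` and
the tail `∑ i > N, (c i - 1) • p i x`. Summation by parts expresses the head through
the `S n`, which are bounded by `K * ‖x‖`. In the tail, `p i x = R i - R (i + 1)`, so that summation
by parts expresses it through the `R n`, which are bounded by `(1 + K) * ‖x‖`; its boundary term at
infinity vanishes because `c` is bounded and `R n` tends to `0`.
-/

section SummationByParts

theorem sum_range_smul_sub_succ {R M : Type*} [Ring R] [AddCommGroup M] [Module R M]
    (a : ℕ → R) (r : ℕ → M) (n : ℕ) :
    ∑ i ∈ Finset.range n, a i • (r i - r (i + 1)) =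
      a 0 • r 0 - a n • r n + ∑ i ∈ Finset.range n, (a (i + 1) - a i) • r (i + 1) := by
  induction n with
  | zero => simp
  | succ n ih =>
    rw [Finset.sum_range_succ, Finset.sum_range_succ, ih, smul_sub, sub_smul]
    abel

theorem tendsto_sum_range_add {G : Type*} [AddCommGroup G] [TopologicalSpace G]
    [ContinuousSub G] {f : ℕ → G} {s : G}
    (hf : Tendsto (fun n => ∑ i ∈ Finset.range n, f i) atTop (𝓝 s)) (m : ℕ) :
    Tendsto (fun n => ∑ i ∈ Finset.range n, f (m + i)) atTop
      (𝓝 (s - ∑ i ∈ Finset.range m, f i)) := by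
  refine ((hf.comp (tendsto_add_atTop_nat m)).sub_const _).congr fun n => ?_
  rw [Function.comp_apply, add_comm n m, Finset.sum_range_add_sub_sum_range]

variable {𝕜 E : Type*} [NormedField 𝕜] [SeminormedAddCommGroup E] [NormedSpace 𝕜 E]

theorem norm_smul_le_mul_of_norm_le (a : 𝕜) {v : E} {B : ℝ} (hv : ‖v‖ ≤ B) :
    ‖a • v‖ ≤ ‖a‖ * B :=
  (norm_smul_le a v).trans (by gcongr)

theorem norm_sum_smul_le_sum_norm_mul {ι : Type*} (s : Finset ι) (a : ι → 𝕜) {v : ι → E}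
    {B : ℝ} (hv : ∀ i ∈ s, ‖v i‖ ≤ B) : ‖∑ i ∈ s, a i • v i‖ ≤ (∑ i ∈ s, ‖a i‖) * B := by
  rw [Finset.sum_mul]
  exact norm_sum_le_of_le s fun i hi => norm_smul_le_mul_of_norm_le (a i) (hv i hi)

theorem norm_sum_range_succ_smul_le (c : ℕ → 𝕜) {x : ℕ → E} {A : ℝ} {N : ℕ}
    (hA : ∀ n ≤ N, ‖∑ i ∈ Finset.range (n + 1), x i‖ ≤ A) :
    ‖∑ i ∈ Finset.range (N + 1), c i • x i‖ ≤
      (‖c N‖ + ∑ i ∈ Finset.range N, ‖c (i + 1) - c i‖) * A := by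
  rw [Finset.sum_range_by_parts, Nat.add_sub_cancel, add_mul]
  refine norm_sub_le_of_le (norm_smul_le_mul_of_norm_le _ (hA N le_rfl)) ?_
  exact norm_sum_smul_le_sum_norm_mul _ _ fun i hi => hA i (Finset.mem_range.1 hi).le

theorem norm_le_of_tendsto_sum_smul {a : ℕ → 𝕜} {x : ℕ → E} {s z : E} {B : ℝ}
    (ha : Summable fun n => ‖a (n + 1) - a n‖)
    (hs : Tendsto (fun n => ∑ i ∈ Finset.range n, x i) atTop (𝓝 s))
    (hz : Tendsto (fun n => ∑ i ∈ Finset.range n, a i • x i) atTop (𝓝 z))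
    (hB : ∀ n, ‖s - ∑ i ∈ Finset.range n, x i‖ ≤ B) :
    ‖z‖ ≤ (‖a 0‖ + ∑' n, ‖a (n + 1) - a n‖) * B := by
  let r : ℕ → E := fun n => s - ∑ i ∈ Finset.range n, x i
  have x_eq (i : ℕ) : x i = r i - r (i + 1) := by
    simp only [r, Finset.sum_range_succ]
    abel
  have hr : Tendsto r atTop (𝓝 0) := by simpa only [sub_self] using hs.const_sub s
  have a_bounded : IsBoundedUnder (· ≤ ·) atTop (norm ∘ a) := by
    have a_cauchy : CauchySeq a :=
      cauchySeq_of_summable_dist (by simpa only [dist_eq_norm_sub'] using ha)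
    obtain ⟨C, hC⟩ := a_cauchy.isBounded_range.exists_norm_le
    exact isBoundedUnder_of ⟨C, fun n => hC _ ⟨n, rfl⟩⟩
  have boundary : Tendsto (fun n => a n • r n) atTop (𝓝 0) := a_bounded.smul_tendsto_zero hr
  have hlim : Tendsto (fun n => ∑ i ∈ Finset.range n, a i • x i + a n • r n) atTop (𝓝 z) := by
    simpa only [add_zero] using hz.add boundary
  refine le_of_tendsto' hlim.norm fun n => ?_
  calc ‖∑ i ∈ Finset.range n, a i • x i + a n • r n‖
      = ‖a 0 • r 0 + ∑ i ∈ Finset.range n, (a (i + 1) - a i) • r (i + 1)‖ := by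
        simp only [x_eq, sum_range_smul_sub_succ]
        congr 1
        abel
    _ ≤ ‖a 0‖ * B + (∑ i ∈ Finset.range n, ‖a (i + 1) - a i‖) * B :=
        norm_add_le_of_le (norm_smul_le_mul_of_norm_le _ (hB 0))
          (norm_sum_smul_le_sum_norm_mul _ _ fun i _ => hB (i + 1))
    _ ≤ (‖a 0‖ + ∑' i, ‖a (i + 1) - a i‖) * B := by
        have B_nonneg : 0 ≤ B := (norm_nonneg _).trans (hB 0)
        rw [← add_mul]
        gcongr
        exact ha.sum_le_tsum _ fun _ _ => norm_nonneg _

theorem norm_sub_smul_remainder_le {c : ℕ → 𝕜} {x : ℕ → E} {s y : E} {A B : ℝ} {N : ℕ}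
    (hc : Summable fun n => ‖c (n + 1) - c n‖)
    (hs : Tendsto (fun n => ∑ i ∈ Finset.range n, x i) atTop (𝓝 s))
    (hy : Tendsto (fun n => ∑ i ∈ Finset.range n, c i • x i) atTop (𝓝 y))
    (hA : ∀ n ≤ N, ‖∑ i ∈ Finset.range (n + 1), x i‖ ≤ A)
    (hB : ∀ n ≥ N, ‖s - ∑ i ∈ Finset.range (n + 1), x i‖ ≤ B) (l : 𝕜) :
    ‖y - l • (s - ∑ i ∈ Finset.range (N + 1), x i)‖ ≤
      (‖c N‖ + ∑ n ∈ Finset.range N, ‖c (n + 1) - c n‖) * A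
        + (‖l - c (N + 1)‖ + ∑' n, ‖c (n + N + 2) - c (n + N + 1)‖) * B := by
  set head : E := ∑ i ∈ Finset.range (N + 1), c i • x i
  set rem : E := s - ∑ i ∈ Finset.range (N + 1), x i
  have tendsto_rem : Tendsto (fun n => ∑ i ∈ Finset.range n, x (N + 1 + i)) atTop (𝓝 rem) :=
    tendsto_sum_range_add hs (N + 1)
  have tendsto_tail : Tendsto (fun n => ∑ i ∈ Finset.range n, (c (N + 1 + i) - l) • x (N + 1 + i))
      atTop (𝓝 (y - head - l • rem)) := by
    simp only [sub_smul, Finset.sum_sub_distrib, ← Finset.smul_sum]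
    exact (tendsto_sum_range_add hy (N + 1)).sub (tendsto_rem.const_smul l)
  have norm_rem (n : ℕ) : ‖rem - ∑ i ∈ Finset.range n, x (N + 1 + i)‖ ≤ B := by
    rw [← Finset.sum_range_add_sub_sum_range, sub_sub_sub_cancel_right, add_right_comm]
    exact hB (N + n) (Nat.le_add_right N n)
  have increment (n : ℕ) :
      c (N + 1 + (n + 1)) - l - (c (N + 1 + n) - l) = c (n + N + 2) - c (n + N + 1) := by
    rw [sub_sub_sub_cancel_right, show N + 1 + (n + 1) = n + N + 2 by ring,
      show N + 1 + n = n + N + 1 by ring]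
  have summable_tail : Summable fun n => ‖c (n + N + 2) - c (n + N + 1)‖ :=
    (summable_nat_add_iff (f := fun n => ‖c (n + 1) - c n‖) (N + 1)).2 hc
  have norm_tail : ‖y - head - l • rem‖ ≤
      (‖l - c (N + 1)‖ + ∑' n, ‖c (n + N + 2) - c (n + N + 1)‖) * B := by
    rw [norm_sub_rev l]
    simp only [← increment] at summable_tail ⊢
    exact norm_le_of_tendsto_sum_smul (a := fun n => c (N + 1 + n) - l) summable_tail tendsto_rem
      tendsto_tail norm_rem
  have split : y - l • rem = head + (y - head - l • rem) := by abel
  rw [split]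
  exact norm_add_le_of_le (norm_sum_range_succ_smul_le c hA) norm_tail

end SummationByParts

theorem statement7_general {𝕜 X : Type*} [NontriviallyNormedField 𝕜] [SeminormedAddCommGroup X]
    [NormedSpace 𝕜 X] {p : ℕ → X →L[𝕜] X}
    (hp : ∀ x, Tendsto (fun n => ∑ i ∈ Finset.range n, p i x) atTop (𝓝 x))
    {K : ℝ} (hK : ∀ n, ‖∑ i ∈ Finset.range (n + 1), p i‖ ≤ K)
    {c : ℕ → 𝕜} (hbv : Summable fun n => ‖c n - c (n + 1)‖) {M : X →L[𝕜] X}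
    (hM : ∀ x, Tendsto (fun n => ∑ i ∈ Finset.range n, c i • p i x) atTop (𝓝 (M x)))
    (l : 𝕜) (N : ℕ) :
    ‖M - l • (1 - ∑ i ∈ Finset.range (N + 1), p i)‖ ≤
      (1 + K) * ((∑ n ∈ Finset.range N, ‖c (n + 1) - c n‖) + ‖c N‖ + ‖l - c (N + 1)‖
        + ∑' n : ℕ, ‖c (n + N + 2) - c (n + N + 1)‖) := by
  have K_nonneg : 0 ≤ K := (norm_nonneg _).trans (hK 0)
  have summable_increments : Summable fun n => ‖c (n + 1) - c n‖ := by
    simpa only [norm_sub_rev] using hbv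
  refine ContinuousLinearMap.opNorm_le_bound _ (by positivity) fun x => ?_
  have norm_partial (n : ℕ) : ‖∑ i ∈ Finset.range (n + 1), p i x‖ ≤ K * ‖x‖ := by
    rw [← sum_apply]
    exact ContinuousLinearMap.le_of_opNorm_le _ (hK n) x
  have norm_remainder (n : ℕ) :
      ‖x - ∑ i ∈ Finset.range (n + 1), p i x‖ ≤ (1 + K) * ‖x‖ := by
    rw [one_add_mul]
    exact norm_sub_le_of_le le_rfl (norm_partial n)
  have norm_partial_weak (n : ℕ) : ‖∑ i ∈ Finset.range (n + 1), p i x‖ ≤ (1 + K) * ‖x‖ :=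
    (norm_partial n).trans (by gcongr; linarith)
  have bound := norm_sub_smul_remainder_le (N := N) summable_increments (hp x) (hM x)
    (fun n _ => norm_partial_weak n) (fun n _ => norm_remainder n) l
  have apply_eq : (M - l • (1 - ∑ i ∈ Finset.range (N + 1), p i)) x =
      M x - l • (x - ∑ i ∈ Finset.range (N + 1), p i x) := by
    simp
  rw [apply_eq]
  refine bound.trans_eq ?_
  ring

/-- Estimate of `‖M_c − Q_N‖` for a bounded-variation sequence `c` with limit `1`,
where `Q_N = I − P_N`. (The index `N + 1` here corresponds to `N ≥ 1` in classical,
`1`-based notation.) -/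
theorem statement7 {X : Type*} [NormedAddCommGroup X] [NormedSpace ℂ X] [CompleteSpace X]
    (p : ℕ → X →L[ℂ] X) (hp : IsSchauderDecomposition p)
    (K : ℝ) (hK : ∀ N : ℕ, ‖partialSum p (N + 1)‖ ≤ K)
    (c : ℕ → ℂ) (hbv : Summable fun n => ‖c n - c (n + 1)‖)
    (hl : Tendsto c atTop (nhds (1 : ℂ)))
    (M : X →L[ℂ] X)
    (hM : ∀ x : X, Tendsto (fun N => ∑ n ∈ Finset.range N, c n • p n x) atTop (nhds (M x))) :
    ∀ N : ℕ,
      ‖M - (1 - partialSum p (N + 1))‖ ≤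
        (1 + K) * ((∑ n ∈ Finset.range N, ‖c (n + 1) - c n‖) + ‖c N‖ + ‖1 - c (N + 1)‖
          + ∑' n : ℕ, ‖c (n + N + 2) - c (n + N + 1)‖) := by
  intro N
  simpa only [one_smul, partialSum] using statement7_general hp.2.2 hK hbv hM 1 N
end
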